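/- Let H(x) = −x·log₂ x − (1−x)·log₂(1−x) be the binary entropy function, and let λ ∈ (0, 1/2) be the solution of λ + H(λ) = 1. Then for every c with λ < c < 1/2 there exists N such that for all n ≥ N, every comparative probability order on [n] has at most 2^{H(c)·n} flippable pairs. -/

import Mathlib

open Finset

/-- The strict part of a (total antisymmetric) order on subsets. -/
def cpLT {n : ℕ} (le : Finset (Fin n) → Finset (Fin n) → Prop)
    (A B : Finset (Fin n)) : Prop :=
  le A B ∧ A ≠ B

/-- `le` is a comparative probability order on `[n]`: a linear (total,
antisymmetric, transitive) order on the powerset of `[n]` with `∅ ≺ A` for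
nonempty `A`, satisfying de Finetti's axiom. -/
def IsCPO {n : ℕ} (le : Finset (Fin n) → Finset (Fin n) → Prop) : Prop :=
  (∀ A B, le A B ∨ le B A) ∧
  (∀ A B, le A B → le B A → A = B) ∧
  (∀ A B C, le A B → le B C → le A C) ∧
  (∀ A : Finset (Fin n), A ≠ ∅ → cpLT le ∅ A) ∧
  (∀ A B C : Finset (Fin n), Disjoint (A ∪ B) C → (le A B ↔ le (A ∪ C) (B ∪ C)))

/-- `(A,B)` is a critical pair: disjoint, `A ≺ B`, and no `C` with `A ≺ C ≺ B`. -/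
def Critical {n : ℕ} (le : Finset (Fin n) → Finset (Fin n) → Prop)
    (A B : Finset (Fin n)) : Prop :=
  Disjoint A B ∧ cpLT le A B ∧ ¬ ∃ C, cpLT le A C ∧ cpLT le C B

/-- `(A,B)` is a flippable pair: critical, and for every `D` disjoint from
`A ∪ B` the pair `(A ∪ D, B ∪ D)` is adjacent. -/
def Flippable {n : ℕ} (le : Finset (Fin n) → Finset (Fin n) → Prop)
    (A B : Finset (Fin n)) : Prop :=
  Critical le A B ∧
  ∀ D : Finset (Fin n), Disjoint D (A ∪ B) →
    ¬ ∃ C, cpLT le (A ∪ D) C ∧ cpLT le C (B ∪ D)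

/-- The set of flippable pairs of an order. -/
def FlippablePairs {n : ℕ} (le : Finset (Fin n) → Finset (Fin n) → Prop) :
    Set (Finset (Fin n) × Finset (Fin n)) :=
  {p | Flippable le p.1 p.2}

/-- `le` is (additively) representable by a positive utility vector. -/
def Representable {n : ℕ} (le : Finset (Fin n) → Finset (Fin n) → Prop) : Prop :=
  ∃ u : Fin n → ℝ, (∀ i, 0 < u i) ∧
    ∀ A B : Finset (Fin n), le A B ↔ ∑ i ∈ A, u i ≤ ∑ i ∈ B, u i

/-- `(X, Y) = (A ∪ D, B ∪ D)` for some `D` disjoint from `A ∪ B`. -/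
def FlipRel {n : ℕ} (A B X Y : Finset (Fin n)) : Prop :=
  ∃ D : Finset (Fin n), Disjoint D (A ∪ B) ∧ X = A ∪ D ∧ Y = B ∪ D

/-- The relation obtained from `le` by flipping over the pair `(A,B)`:
all comparisons between `A ∪ D` and `B ∪ D` (for `D` disjoint from `A ∪ B`)
are reversed, all other comparisons are kept. -/
def flipOrder {n : ℕ} (le : Finset (Fin n) → Finset (Fin n) → Prop)
    (A B : Finset (Fin n)) : Finset (Fin n) → Finset (Fin n) → Prop :=
  fun X Y => (le X Y ∧ ¬ FlipRel A B X Y) ∨ FlipRel A B Y X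

/-- Utility (sum of weights) of a subset. -/
def usum {k : ℕ} (m : Fin k → ℕ) (A : Finset (Fin k)) : ℕ := ∑ i ∈ A, m i

/-- The order on subsets induced by a utility vector. -/
def uord {k : ℕ} (m : Fin k → ℕ) : Finset (Fin k) → Finset (Fin k) → Prop :=
  fun A B => usum m A ≤ usum m B

/-- The binary entropy function `H(x) = −x log₂ x − (1−x) log₂ (1−x)`. -/
noncomputable def Hb (x : ℝ) : ℝ := -x * Real.logb 2 x - (1 - x) * Real.logb 2 (1 - x)

theorem cp_total {n : ℕ} {le : Finset (Fin n) → Finset (Fin n) → Prop} (h : IsCPO le)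
    {A B : Finset (Fin n)} (hn : ¬ cpLT le A B) : le B A := by
  obtain ⟨ht, -, -, -, -⟩ := h
  rcases ht A B with h1 | h1
  · by_cases hAB : A = B
    · subst hAB; exact h1
    · exact absurd ⟨h1, hAB⟩ hn
  · exact h1

theorem cp_compl {n : ℕ} {le : Finset (Fin n) → Finset (Fin n) → Prop} (h : IsCPO le)
    {A A' B B' : Finset (Fin n)} (hd : Disjoint A B) (hd' : Disjoint A' B')
    (hu : A ∪ B = A' ∪ B') (hle : le A A') : le B' B := by
  obtain ⟨-, -, -, -, hF⟩ := h
  have e1 : A = (A \ A') ∪ (A ∩ A') := by grind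
  have e2 : A' = (A' \ A) ∪ (A ∩ A') := by grind
  have d1 : Disjoint ((A \ A') ∪ (A' \ A)) (A ∩ A') := by
    rw [Finset.disjoint_left]; grind
  have k1 : le (A \ A') (A' \ A) := by
    rw [hF _ _ _ d1, ← e1, ← e2]; exact hle
  rw [Finset.disjoint_left] at hd hd'
  have hx : ∀ x, (x ∈ A ∨ x ∈ B) ↔ (x ∈ A' ∨ x ∈ B') := by
    intro x
    rw [← Finset.mem_union, hu, Finset.mem_union]
  have e3 : B' = (A \ A') ∪ (B ∩ B') := by
    ext x; have := hx x; have := @hd x; have := @hd' x; simp; tauto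
  have e4 : B = (A' \ A) ∪ (B ∩ B') := by
    ext x; have := hx x; have := @hd x; have := @hd' x; simp; tauto
  have d2 : Disjoint ((A \ A') ∪ (A' \ A)) (B ∩ B') := by
    rw [Finset.disjoint_left]
    intro x; have := @hd x; have := @hd' x; simp; tauto
  have := (hF _ _ _ d2).1 k1
  rwa [← e3, ← e4] at this

theorem crit_aux {n : ℕ} {le : Finset (Fin n) → Finset (Fin n) → Prop} (h : IsCPO le)
    {A A' B B' : Finset (Fin n)} (hc : Critical le A B) (hc' : Critical le A' B')
    (hu : A ∪ B = A' ∪ B') (hle : le A A') : A = A' := by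
  by_contra hne
  have k1 := cp_compl h hc.1 hc'.1 hu hle
  have k2 : le B A' := cp_total h (fun hh => hc.2.2 ⟨A', ⟨hle, hne⟩, hh⟩)
  have k3 := hc'.2.1
  obtain ⟨-, hanti, htr, -, -⟩ := h
  exact k3.2 (hanti _ _ k3.1 (htr _ _ _ k1 k2))

theorem crit_inj {n : ℕ} {le : Finset (Fin n) → Finset (Fin n) → Prop} (h : IsCPO le)
    {A A' B B' : Finset (Fin n)} (hc : Critical le A B) (hc' : Critical le A' B')
    (hu : A ∪ B = A' ∪ B') : A = A' ∧ B = B' := by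
  have hA : A = A' := by
    rcases h.1 A A' with hh | hh
    · exact crit_aux h hc hc' hu hh
    · exact (crit_aux h hc' hc hu.symm hh).symm
  refine ⟨hA, ?_⟩
  subst hA
  have hd := hc.1
  have hd' := hc'.1
  rw [Finset.disjoint_left] at hd hd'
  ext x
  have hx : (x ∈ A ∨ x ∈ B) ↔ (x ∈ A ∨ x ∈ B') := by
    rw [← Finset.mem_union, hu, Finset.mem_union]
  have := @hd x; have := @hd' x; tauto

theorem succ_unique {n : ℕ} {le : Finset (Fin n) → Finset (Fin n) → Prop} (h : IsCPO le)
    {X Y Z : Finset (Fin n)} (h1 : cpLT le X Y) (h2 : cpLT le X Z)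
    (h3 : ¬ ∃ C, cpLT le X C ∧ cpLT le C Y) (h4 : ¬ ∃ C, cpLT le X C ∧ cpLT le C Z) :
    Y = Z :=
  h.2.1 _ _ (cp_total h fun hh => h3 ⟨Z, h2, hh⟩) (cp_total h fun hh => h4 ⟨Y, h1, hh⟩)

theorem flip_lt {n : ℕ} {le : Finset (Fin n) → Finset (Fin n) → Prop} (h : IsCPO le)
    {A B D : Finset (Fin n)} (hf : Flippable le A B) (hD : Disjoint D (A ∪ B)) :
    cpLT le (A ∪ D) (B ∪ D) := by
  obtain ⟨⟨hd, ⟨hle, hne⟩, -⟩, -⟩ := hf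
  refine ⟨(h.2.2.2.2 A B D hD.symm).1 hle, fun he => hne ?_⟩
  rw [Finset.disjoint_left] at hD
  ext x
  have : x ∈ A ∪ D ↔ x ∈ B ∪ D := by rw [he]
  have := @hD x
  simp only [Finset.mem_union] at *
  tauto

theorem recover {n : ℕ} {A B D A' B' D' : Finset (Fin n)}
    (hd : Disjoint A B) (hd' : Disjoint A' B')
    (hD : Disjoint D (A ∪ B)) (hD' : Disjoint D' (A' ∪ B'))
    (e1 : A ∪ D = A' ∪ D') (e2 : B ∪ D = B' ∪ D') : A = A' ∧ B = B' ∧ D = D' := by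
  rw [Finset.disjoint_left] at hd hd' hD hD'
  have key : ∀ x, (x ∈ A ↔ x ∈ A') ∧ (x ∈ B ↔ x ∈ B') ∧ (x ∈ D ↔ x ∈ D') := by
    intro x
    have h1 : x ∈ A ∪ D ↔ x ∈ A' ∪ D' := by rw [e1]
    have h2 : x ∈ B ∪ D ↔ x ∈ B' ∪ D' := by rw [e2]
    have h3 := @hd x
    have h4 := @hd' x
    have h5 := @hD x
    have h6 := @hD' x
    clear hd hd' hD hD' e1 e2
    simp only [Finset.mem_union] at *
    grind
  exact ⟨Finset.ext fun x => (key x).1, Finset.ext fun x => (key x).2.1,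
    Finset.ext fun x => (key x).2.2⟩

/-- The adjacent pairs belonging to distinct flippable pairs are distinct. -/
theorem weighted_count {n : ℕ} {le : Finset (Fin n) → Finset (Fin n) → Prop} (h : IsCPO le)
    (F : Finset (Finset (Fin n) × Finset (Fin n))) (hF : ∀ p ∈ F, Flippable le p.1 p.2) :
    ∑ p ∈ F, 2 ^ ((p.1 ∪ p.2)ᶜ).card ≤ 2 ^ n := by
  have h1 : (F.sigma fun p => ((p.1 ∪ p.2)ᶜ).powerset).card
      ≤ (Finset.univ : Finset (Finset (Fin n))).card := by
    apply Finset.card_le_card_of_injOn (fun q => q.1.1 ∪ q.2)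
    · intro x _; simp
    · rintro ⟨⟨A, B⟩, D⟩ hx ⟨⟨A', B'⟩, D'⟩ hy hxy
      simp only [Finset.coe_sigma, Set.mem_sigma_iff, Finset.mem_coe, Finset.mem_powerset] at hx hy
      simp only at hxy
      have f := hF _ hx.1
      have f' := hF _ hy.1
      have dD : Disjoint D (A ∪ B) := by
        have := hx.2
        exact le_compl_iff_disjoint_right.1 this
      have dD' : Disjoint D' (A' ∪ B') := by
        have := hy.2
        exact le_compl_iff_disjoint_right.1 this
      have l := flip_lt h f dD
      have l' := flip_lt h f' dD'
      have n1 := f.2 D dD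
      have n2 := f'.2 D' dD'
      simp only at l l' n1 n2
      rw [← hxy] at l' n2
      have e2 := succ_unique h l l' n1 n2
      obtain ⟨rfl, rfl, rfl⟩ := recover f.1.1 f'.1.1 dD dD' hxy e2
      rfl
  simpa only [Finset.card_sigma, Finset.card_powerset, Finset.card_univ, Fintype.card_finset,
    Fintype.card_fin] using h1

theorem Hb_eq (x : ℝ) : Hb x = Real.binEntropy x / Real.log 2 := by
  unfold Hb Real.binEntropy Real.logb
  rw [Real.log_inv, Real.log_inv]
  ring

/-- Entropy bound for families of small sets. -/
theorem small_sets {n : ℕ} (lam : ℝ) (hl0 : 0 < lam) (hl1 : lam < 1 / 2)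
    (G : Finset (Finset (Fin n))) (hG : ∀ T ∈ G, (T.card : ℝ) ≤ lam * n) :
    (G.card : ℝ) ≤ (2 : ℝ) ^ (Hb lam * n) := by
  have hl2 : 0 < 1 - lam := by linarith
  have hlog : 0 < Real.log 2 := Real.log_pos (by norm_num)
  have hsum : ∑ T : Finset (Fin n), lam ^ T.card * (1 - lam) ^ (n - T.card) = 1 := by
    have := Finset.sum_pow_mul_eq_add_pow lam (1 - lam) (Finset.univ : Finset (Fin n))
    simpa using this
  have hterm : ∀ T ∈ G, (2 : ℝ) ^ (-(Hb lam * n)) ≤ lam ^ T.card * (1 - lam) ^ (n - T.card) := by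
    intro T hT
    have hc := hG T hT
    have hTn : T.card ≤ n := by simpa using Finset.card_le_univ T
    rw [← Real.log_le_log_iff (by positivity) (by positivity), Real.log_rpow (by norm_num),
      Real.log_mul (by positivity) (by positivity), Real.log_pow, Real.log_pow, Nat.cast_sub hTn]
    have e : -(Hb lam * n) * Real.log 2
        = n * (lam * Real.log lam + (1 - lam) * Real.log (1 - lam)) := by
      unfold Hb Real.logb
      field_simp
      ring
    rw [e]
    have hll : Real.log lam ≤ Real.log (1 - lam) := Real.log_le_log hl0 (by linarith)
    nlinarith [mul_nonneg (sub_nonneg.2 hc) (sub_nonneg.2 hll)]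
  have h1 : (G.card : ℝ) * (2 : ℝ) ^ (-(Hb lam * n)) ≤ 1 := by
    rw [← hsum, ← nsmul_eq_mul]
    refine (Finset.card_nsmul_le_sum G _ _ hterm).trans ?_
    exact Finset.sum_le_sum_of_subset_of_nonneg (Finset.subset_univ _)
      (fun _ _ _ => by positivity)
  rw [Real.rpow_neg (by norm_num), ← div_eq_mul_inv, div_le_one (by positivity)] at h1
  exact h1

/-- Let `λ ∈ (0, 1/2)` solve `λ + H(λ) = 1`. For every `c` with `λ < c < 1/2`,
for all sufficiently large `n`, every comparative probability order on `[n]`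
has at most `2^(H(c)·n)` flippable pairs. -/
theorem stmt15 (lam : ℝ) (hl0 : 0 < lam) (hl1 : lam < 1 / 2)
    (hlam : lam + Hb lam = 1) (c : ℝ) (hc1 : lam < c) (hc2 : c < 1 / 2) :
    ∃ N : ℕ, ∀ n : ℕ, N ≤ n →
      ∀ le : Finset (Fin n) → Finset (Fin n) → Prop, IsCPO le →
        ((FlippablePairs le).ncard : ℝ) ≤ (2 : ℝ) ^ (Hb c * n) := by
  classical
  have hlog : 0 < Real.log 2 := Real.log_pos (by norm_num)
  have hH : Hb lam < Hb c := by
    rw [Hb_eq, Hb_eq]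
    apply div_lt_div_of_pos_right _ hlog
    exact Real.binEntropy_strictMonoOn ⟨hl0.le, by norm_num; linarith⟩
      ⟨by linarith, by norm_num; linarith⟩ hc1
  obtain ⟨N, hN⟩ := exists_nat_ge (1 / (Hb c - Hb lam))
  refine ⟨N, fun n hn le h => ?_⟩
  have hbig : 1 + Hb lam * n ≤ Hb c * n := by
    have h2 : 1 / (Hb c - Hb lam) ≤ (n : ℝ) := hN.trans (by exact_mod_cast hn)
    rw [div_le_iff₀ (by linarith)] at h2
    linarith
  have hfin : (FlippablePairs le).Finite := Set.toFinite _
  set F := hfin.toFinset with hFdef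
  have hF : ∀ p ∈ F, Flippable le p.1 p.2 := by
    intro p hp
    have : p ∈ FlippablePairs le := by simpa [hFdef] using hp
    exact this
  rw [Set.ncard_eq_toFinset_card _ hfin, ← hFdef,
    ← Finset.card_filter_add_card_filter_not
      (fun p : Finset (Fin n) × Finset (Fin n) => (((p.1 ∪ p.2)ᶜ).card : ℝ) ≤ lam * n)]
  push_cast
  set F1 := F.filter
    (fun p : Finset (Fin n) × Finset (Fin n) => (((p.1 ∪ p.2)ᶜ).card : ℝ) ≤ lam * n) with hF1
  set F2 := F.filter
    (fun p : Finset (Fin n) × Finset (Fin n) => ¬ (((p.1 ∪ p.2)ᶜ).card : ℝ) ≤ lam * n) with hF2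
  have b1 : (F1.card : ℝ) ≤ (2 : ℝ) ^ (Hb lam * n) := by
    have hinj : Set.InjOn (fun p : Finset (Fin n) × Finset (Fin n) => (p.1 ∪ p.2)ᶜ) F1 := by
      rintro ⟨A, B⟩ hx ⟨A', B'⟩ hy hxy
      have fx := hF _ (Finset.mem_filter.1 hx).1
      have fy := hF _ (Finset.mem_filter.1 hy).1
      obtain ⟨rfl, rfl⟩ := crit_inj h fx.1 fy.1 (compl_injective hxy)
      rfl
    rw [← Finset.card_image_of_injOn hinj]
    apply small_sets lam hl0 hl1
    intro T hT
    obtain ⟨p, hp, rfl⟩ := Finset.mem_image.1 hT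
    exact (Finset.mem_filter.1 hp).2
  have b2 : (F2.card : ℝ) ≤ (2 : ℝ) ^ (Hb lam * n) := by
    have w := weighted_count h F2 (fun p hp => hF p (Finset.mem_filter.1 hp).1)
    have w' : ∑ p ∈ F2, (2 : ℝ) ^ ((p.1 ∪ p.2)ᶜ).card ≤ 2 ^ n := by exact_mod_cast w
    have hterm : ∀ p ∈ F2, (2 : ℝ) ^ (lam * n) ≤ (2 : ℝ) ^ ((p.1 ∪ p.2)ᶜ).card := by
      intro p hp
      rw [← Real.rpow_natCast]
      apply Real.rpow_le_rpow_of_exponent_le (by norm_num)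
      exact (not_le.1 (Finset.mem_filter.1 hp).2).le
    have h3 := (Finset.card_nsmul_le_sum F2 _ _ hterm).trans w'
    rw [nsmul_eq_mul, ← Real.rpow_natCast 2 n] at h3
    have e : (2 : ℝ) ^ (n : ℝ) = (2 : ℝ) ^ (Hb lam * n) * (2 : ℝ) ^ (lam * n) := by
      rw [← Real.rpow_add (by norm_num)]
      congr 1
      linear_combination (-(n : ℝ)) * hlam
    rw [e] at h3
    exact le_of_mul_le_mul_right h3 (by positivity)
  calc (F1.card : ℝ) + F2.card ≤ (2 : ℝ) ^ (1 + Hb lam * n) := by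
        rw [Real.rpow_add (by norm_num), Real.rpow_one]; linarith
    _ ≤ _ := Real.rpow_le_rpow_of_exponent_le (by norm_num) hbig
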